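/- Let $B = [0,L_1]\times[0,L_2]$, let $\mathcal{H}$ be a smooth second-order density with $x$-slots in $\mathbb{R}^n$, and let $x:\mathbb{R}\times B\to\mathbb{R}^n$ be smooth. Let $\mathcal{J}^{\alpha\beta}, \mathcal{R}^{\alpha\beta}, \mathcal{G}^\alpha_\xi : \mathbb{R}\times B \to \mathbb{R}$ ($\alpha,\beta = 1,\dots,n$, $\xi = 1,\dots,l$) be smooth with $\mathcal{J}^{\alpha\beta} = -\mathcal{J}^{\beta\alpha}$ pointwise, and let $u^\xi:\mathbb{R}\to\mathbb{R}$ be lumped inputs. Suppose $x$ satisfies $\dot{x}^\alpha = (\mathcal{J}^{\alpha\beta}-\mathcal{R}^{\alpha\beta})\,\delta_\beta\mathcal{H}[x] + \mathcal{G}^\alpha_\xi u^\xi$ on $B$, define the output densities $y_\xi = \mathcal{G}^\alpha_\xi\,\delta_\alpha\mathcal{H}[x]$, and suppose that for every $t$ all boundary contributions vanish, i.e. on the edges $z^1\in\{0,L_1\}$: $\dot{x}^\alpha(\mathcal{H}^{[10]}_\alpha - \partial_1\mathcal{H}^{[20]}_\alpha - \partial_2\mathcal{H}^{[11]}_\alpha)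 + \dot{x}^\alpha_{[10]}\mathcal{H}^{[20]}_\alpha = 0$, on the edges $z^2\in\{0,L_2\}$: $\dot{x}^\alpha(\mathcal{H}^{[01]}_\alpha - \partial_2\mathcal{H}^{[02]}_\alpha - \partial_1\mathcal{H}^{[11]}_\alpha) + \dot{x}^\alpha_{[01]}\mathcal{H}^{[02]}_\alpha = 0$, and $\dot{x}^\alpha\mathcal{H}^{[11]}_\alpha = 0$ at the four corners of $B$. Then $\frac{d}{dt}\iint_B\mathcal{H}[x]\,dz^1dz^2 = -\iint_B \delta_\alpha\mathcal{H}[x]\,\mathcal{R}^{\alpha\beta}\,\delta_\beta\mathcal{H}[x]\,dz^1dz^2 + \iint_B u^\xi y_\xi\,dz^1dz^2$. -/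

import Mathlib

open MeasureTheory

/-- The jet space `(z¹, z², x, x_[10], x_[01], x_[20], x_[11], x_[02])`. -/
abbrev Jet2 (n : ℕ) :=
  ℝ × ℝ × (Fin n → ℝ) × (Fin n → ℝ) × (Fin n → ℝ) × (Fin n → ℝ) × (Fin n → ℝ) × (Fin n → ℝ)

/-- Time derivative of a field `f(t,z¹,z²)`. -/
noncomputable def pt2 {E : Type*} [NormedAddCommGroup E] [NormedSpace ℝ E]
    (f : ℝ → ℝ → ℝ → E) : ℝ → ℝ → ℝ → E := fun t a b => deriv (fun s => f s a b) t

/-- Derivative `∂₁` with respect to `z¹`. -/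
noncomputable def dz1 {E : Type*} [NormedAddCommGroup E] [NormedSpace ℝ E]
    (f : ℝ → ℝ → ℝ → E) : ℝ → ℝ → ℝ → E := fun t a b => deriv (fun s => f t s b) a

/-- Derivative `∂₂` with respect to `z²`. -/
noncomputable def dz2 {E : Type*} [NormedAddCommGroup E] [NormedSpace ℝ E]
    (f : ℝ → ℝ → ℝ → E) : ℝ → ℝ → ℝ → E := fun t a b => deriv (fun s => f t a s) b

/-- Second-order jet of the field `x` at `(t, z¹, z²)`. -/
noncomputable def jet2 {n : ℕ} (x : ℝ → ℝ → ℝ → Fin n → ℝ) (t a b : ℝ) : Jet2 n :=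
  (a, b, x t a b, dz1 x t a b, dz2 x t a b,
    dz1 (dz1 x) t a b, dz1 (dz2 x) t a b, dz2 (dz2 x) t a b)

/-- Composed partial derivative `(∂H/∂x^α)[x]`. -/
noncomputable def sl00 {n : ℕ} (H : Jet2 n → ℝ) (x : ℝ → ℝ → ℝ → Fin n → ℝ)
    (α : Fin n) : ℝ → ℝ → ℝ → ℝ :=
  fun t a b => fderiv ℝ H (jet2 x t a b) (0, 0, Pi.single α 1, 0, 0, 0, 0, 0)

/-- Composed partial derivative `(∂H/∂x^α_[10])[x]`. -/
noncomputable def sl10 {n : ℕ} (H : Jet2 n → ℝ) (x : ℝ → ℝ → ℝ → Fin n → ℝ)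
    (α : Fin n) : ℝ → ℝ → ℝ → ℝ :=
  fun t a b => fderiv ℝ H (jet2 x t a b) (0, 0, 0, Pi.single α 1, 0, 0, 0, 0)

/-- Composed partial derivative `(∂H/∂x^α_[01])[x]`. -/
noncomputable def sl01 {n : ℕ} (H : Jet2 n → ℝ) (x : ℝ → ℝ → ℝ → Fin n → ℝ)
    (α : Fin n) : ℝ → ℝ → ℝ → ℝ :=
  fun t a b => fderiv ℝ H (jet2 x t a b) (0, 0, 0, 0, Pi.single α 1, 0, 0, 0)

/-- Composed partial derivative `(∂H/∂x^α_[20])[x]`. -/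
noncomputable def sl20 {n : ℕ} (H : Jet2 n → ℝ) (x : ℝ → ℝ → ℝ → Fin n → ℝ)
    (α : Fin n) : ℝ → ℝ → ℝ → ℝ :=
  fun t a b => fderiv ℝ H (jet2 x t a b) (0, 0, 0, 0, 0, Pi.single α 1, 0, 0)

/-- Composed partial derivative `(∂H/∂x^α_[11])[x]`. -/
noncomputable def sl11 {n : ℕ} (H : Jet2 n → ℝ) (x : ℝ → ℝ → ℝ → Fin n → ℝ)
    (α : Fin n) : ℝ → ℝ → ℝ → ℝ :=
  fun t a b => fderiv ℝ H (jet2 x t a b) (0, 0, 0, 0, 0, 0, Pi.single α 1, 0)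

/-- Composed partial derivative `(∂H/∂x^α_[02])[x]`. -/
noncomputable def sl02 {n : ℕ} (H : Jet2 n → ℝ) (x : ℝ → ℝ → ℝ → Fin n → ℝ)
    (α : Fin n) : ℝ → ℝ → ℝ → ℝ :=
  fun t a b => fderiv ℝ H (jet2 x t a b) (0, 0, 0, 0, 0, 0, 0, Pi.single α 1)

/-- Variational derivative `δ_α H[x]` on the two-dimensional spatial domain. -/
noncomputable def varDer2 {n : ℕ} (H : Jet2 n → ℝ) (x : ℝ → ℝ → ℝ → Fin n → ℝ)
    (α : Fin n) : ℝ → ℝ → ℝ → ℝ :=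
  fun t a b =>
    sl00 H x α t a b - dz1 (sl10 H x α) t a b - dz2 (sl01 H x α) t a b
      + dz1 (dz1 (sl20 H x α)) t a b + dz1 (dz2 (sl11 H x α)) t a b
      + dz2 (dz2 (sl02 H x α)) t a b

/-- Boundary contribution on edges with normal direction `z¹`:
`ẋ^α (H^[10]_α - ∂₁H^[20]_α - ∂₂H^[11]_α) + ẋ^α_[10] H^[20]_α` (summed over `α`). -/
noncomputable def edge1 {n : ℕ} (H : Jet2 n → ℝ) (x : ℝ → ℝ → ℝ → Fin n → ℝ) :
    ℝ → ℝ → ℝ → ℝ :=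
  fun t a b =>
    ∑ α : Fin n,
      (pt2 x t a b α * (sl10 H x α t a b - dz1 (sl20 H x α) t a b - dz2 (sl11 H x α) t a b)
        + pt2 (dz1 x) t a b α * sl20 H x α t a b)

/-- Boundary contribution on edges with normal direction `z²`:
`ẋ^α (H^[01]_α - ∂₂H^[02]_α - ∂₁H^[11]_α) + ẋ^α_[01] H^[02]_α` (summed over `α`). -/
noncomputable def edge2 {n : ℕ} (H : Jet2 n → ℝ) (x : ℝ → ℝ → ℝ → Fin n → ℝ) :
    ℝ → ℝ → ℝ → ℝ :=
  fun t a b =>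
    ∑ α : Fin n,
      (pt2 x t a b α * (sl01 H x α t a b - dz2 (sl02 H x α) t a b - dz1 (sl11 H x α) t a b)
        + pt2 (dz2 x) t a b α * sl02 H x α t a b)

/-- Corner contribution `ẋ^α H^[11]_α` (summed over `α`). -/
noncomputable def corner2 {n : ℕ} (H : Jet2 n → ℝ) (x : ℝ → ℝ → ℝ → Fin n → ℝ) :
    ℝ → ℝ → ℝ → ℝ :=
  fun t a b => ∑ α : Fin n, pt2 x t a b α * sl11 H x α t a b

/-! Differentiating under the integral sign and applying the chain rule, the rate of change of the
energy is the integral of `ẋ^α_[J] H^[J]_α`, summed over the slots `J` of the jet. Since time and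
space derivatives commute, `ẋ^α_[J] = ∂_J ẋ^α`, and the product rule moves all spatial derivatives
away from `ẋ^α`:
`ẋ^α_[J] H^[J]_α = ẋ^α δ_α H + ∂₁ edge1 + ∂₂ edge2 + ∂₁∂₂ corner2`.
The last three terms integrate to contributions of the edges and corners of the rectangle. In
`ẋ^α δ_α H` one substitutes the dynamics, and the skew matrix `J^{αβ}` drops out. -/

section Fields

variable {E : Type*} [NormedAddCommGroup E] [NormedSpace ℝ E] {k : ℕ}

/-- A field `f(t, z¹, z²)` that is `k` times continuously differentiable jointly in its three
arguments. The order is a natural number, so that each partial derivative lowers it by one. -/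
def ContDiffField (k : ℕ) (f : ℝ → ℝ → ℝ → E) : Prop := ContDiff ℝ k ↿f

theorem fderiv_fderiv_apply_comm {V : Type*} [NormedAddCommGroup V] [NormedSpace ℝ V] {F : V → E}
    (hF : ContDiff ℝ 2 F) (q v w : V) :
    fderiv ℝ (fun p => fderiv ℝ F p v) q w = fderiv ℝ (fun p => fderiv ℝ F p w) q v := by
  have hdF : DifferentiableAt ℝ (fderiv ℝ F) q :=
    (hF.fderiv_right (m := 1) (by norm_num)).differentiable one_ne_zero q
  have apply_second (v w : V) :
      fderiv ℝ (fun p => fderiv ℝ F p v) q w = fderiv ℝ (fderiv ℝ F) q w v := by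
    simp [fderiv_clm_apply hdF (differentiableAt_const v)]
  rw [apply_second, apply_second]
  exact hF.contDiffAt.isSymmSndFDerivAt (by simp) w v

namespace ContDiffField

variable {f g : ℝ → ℝ → ℝ → E}

theorem of_le {m : ℕ} (hf : ContDiffField k f) (hmk : m ≤ k) : ContDiffField m f :=
  ContDiff.of_le hf (by exact_mod_cast hmk)

theorem continuous_slice (hf : ContDiffField k f) (t : ℝ) : Continuous ↿(f t) :=
  (ContDiff.continuous hf).comp (Continuous.prodMk_right t)

theorem hasDerivAt_comp_path (hf : ContDiffField (k + 1) f) {γ : ℝ → ℝ × ℝ × ℝ}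
    {γ' : ℝ × ℝ × ℝ} {s : ℝ} (hγ : HasDerivAt γ γ' s) :
    HasDerivAt (↿f ∘ γ) (fderiv ℝ ↿f (γ s) γ') s :=
  (ContDiff.differentiable hf (by simp) (γ s)).hasFDerivAt.comp_hasDerivAt s hγ

theorem hasDerivAt_pt2 (hf : ContDiffField (k + 1) f) (t a b : ℝ) :
    HasDerivAt (fun s => f s a b) (pt2 f t a b) t :=
  (hf.hasDerivAt_comp_path
    ((hasDerivAt_id t).prodMk (hasDerivAt_const t (a, b)))).differentiableAt.hasDerivAt

theorem hasDerivAt_dz1 (hf : ContDiffField (k + 1) f) (t a b : ℝ) :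
    HasDerivAt (fun s => f t s b) (dz1 f t a b) a :=
  (hf.hasDerivAt_comp_path ((hasDerivAt_const a t).prodMk
    ((hasDerivAt_id a).prodMk (hasDerivAt_const a b)))).differentiableAt.hasDerivAt

theorem hasDerivAt_dz2 (hf : ContDiffField (k + 1) f) (t a b : ℝ) :
    HasDerivAt (fun s => f t a s) (dz2 f t a b) b :=
  (hf.hasDerivAt_comp_path ((hasDerivAt_const b t).prodMk
    ((hasDerivAt_const b a).prodMk (hasDerivAt_id b)))).differentiableAt.hasDerivAt

theorem uncurry_pt2 (hf : ContDiffField (k + 1) f) :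
    ↿(pt2 f) = fun q => fderiv ℝ ↿f q (1, 0, 0) :=
  funext fun (t, a, b) =>
    (hf.hasDerivAt_comp_path ((hasDerivAt_id t).prodMk (hasDerivAt_const t (a, b)))).deriv

theorem uncurry_dz1 (hf : ContDiffField (k + 1) f) :
    ↿(dz1 f) = fun q => fderiv ℝ ↿f q (0, 1, 0) :=
  funext fun (t, a, b) => (hf.hasDerivAt_comp_path
    ((hasDerivAt_const a t).prodMk ((hasDerivAt_id a).prodMk (hasDerivAt_const a b)))).deriv

theorem uncurry_dz2 (hf : ContDiffField (k + 1) f) :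
    ↿(dz2 f) = fun q => fderiv ℝ ↿f q (0, 0, 1) :=
  funext fun (t, a, b) => (hf.hasDerivAt_comp_path
    ((hasDerivAt_const b t).prodMk ((hasDerivAt_const b a).prodMk (hasDerivAt_id b)))).deriv

theorem contDiff_fderiv_apply (hf : ContDiffField (k + 1) f) (v : ℝ × ℝ × ℝ) :
    ContDiff ℝ k fun q => fderiv ℝ ↿f q v :=
  (ContDiff.fderiv_right hf (by norm_cast)).clm_apply contDiff_const

protected theorem pt2 (hf : ContDiffField (k + 1) f) : ContDiffField k (pt2 f) := by
  rw [ContDiffField, hf.uncurry_pt2]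
  exact hf.contDiff_fderiv_apply _

protected theorem dz1 (hf : ContDiffField (k + 1) f) : ContDiffField k (dz1 f) := by
  rw [ContDiffField, hf.uncurry_dz1]
  exact hf.contDiff_fderiv_apply _

protected theorem dz2 (hf : ContDiffField (k + 1) f) : ContDiffField k (dz2 f) := by
  rw [ContDiffField, hf.uncurry_dz2]
  exact hf.contDiff_fderiv_apply _

theorem pt2_dz1_comm (hf : ContDiffField 2 f) :
    pt2 (dz1 f) = dz1 (pt2 f) := by
  have uncurried : ↿(pt2 (dz1 f)) = ↿(dz1 (pt2 f)) := by
    rw [hf.dz1.uncurry_pt2, hf.pt2.uncurry_dz1, hf.uncurry_dz1, hf.uncurry_pt2]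
    exact funext fun q => fderiv_fderiv_apply_comm hf q _ _
  exact funext₃ fun t a b => congrFun uncurried (t, a, b)

theorem pt2_dz2_comm (hf : ContDiffField 2 f) :
    pt2 (dz2 f) = dz2 (pt2 f) := by
  have uncurried : ↿(pt2 (dz2 f)) = ↿(dz2 (pt2 f)) := by
    rw [hf.dz2.uncurry_pt2, hf.pt2.uncurry_dz2, hf.uncurry_dz2, hf.uncurry_pt2]
    exact funext fun q => fderiv_fderiv_apply_comm hf q _ _
  exact funext₃ fun t a b => congrFun uncurried (t, a, b)

theorem dz1_dz2_comm (hf : ContDiffField 2 f) :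
    dz1 (dz2 f) = dz2 (dz1 f) := by
  have uncurried : ↿(dz1 (dz2 f)) = ↿(dz2 (dz1 f)) := by
    rw [hf.dz2.uncurry_dz1, hf.dz1.uncurry_dz2, hf.uncurry_dz2, hf.uncurry_dz1]
    exact funext fun q => fderiv_fderiv_apply_comm hf q _ _
  exact funext₃ fun t a b => congrFun uncurried (t, a, b)

protected theorem add (hf : ContDiffField k f) (hg : ContDiffField k g) : ContDiffField k (f + g) :=
  ContDiff.add hf hg

protected theorem sub (hf : ContDiffField k f) (hg : ContDiffField k g) : ContDiffField k (f - g) :=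
  ContDiff.sub hf hg

protected theorem mul {f g : ℝ → ℝ → ℝ → ℝ} (hf : ContDiffField k f) (hg : ContDiffField k g) :
    ContDiffField k (f * g) :=
  ContDiff.mul hf hg

protected theorem sum {ι : Type*} {s : Finset ι} {F : ι → ℝ → ℝ → ℝ → E}
    (hF : ∀ i ∈ s, ContDiffField k (F i)) : ContDiffField k (∑ i ∈ s, F i) := by
  simpa only [ContDiffField, Function.HasUncurry.uncurry, Finset.sum_apply, id]
    using ContDiff.sum hF

theorem apply {ι : Type*} [Fintype ι] {f : ℝ → ℝ → ℝ → ι → E} (hf : ContDiffField k f) (i : ι) :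
    ContDiffField k fun t a b => f t a b i :=
  contDiff_pi.1 hf i

end ContDiffField
end Fields

section RectangleIntegrals

open intervalIntegral

variable {E : Type*} [NormedAddCommGroup E] [NormedSpace ℝ E]

theorem hasDerivAt_intervalIntegral_of_continuous {F F' : ℝ → ℝ → E} (hF : ∀ s, Continuous (F s))
    (hF' : Continuous ↿F') (hderiv : ∀ s a, HasDerivAt (fun τ => F τ a) (F' s a) s)
    (a₁ a₂ t : ℝ) :
    HasDerivAt (fun s => ∫ a in a₁..a₂, F s a) (∫ a in a₁..a₂, F' t a) t := by
  obtain ⟨C, hC⟩ := ((isCompact_closedBall t 1).prod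
    (isCompact_uIcc (a := a₁) (b := a₂))).exists_bound_of_continuousOn hF'.continuousOn
  refine (hasDerivAt_integral_of_dominated_loc_of_deriv_le
    (bound := fun _ => C) (Metric.closedBall_mem_nhds t one_pos)
    (.of_forall fun s => (hF s).aestronglyMeasurable) ((hF t).intervalIntegrable _ _)
    (hF'.comp (Continuous.prodMk_right t)).aestronglyMeasurable
    (.of_forall fun a ha s hs => hC (s, a) ⟨hs, Set.uIoc_subset_uIcc ha⟩)
    intervalIntegrable_const (.of_forall fun a _ s _ => hderiv s a)).2

theorem integral_integral_swap_of_continuous {f : ℝ → ℝ → E} (hf : Continuous ↿f)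
    (a₁ a₂ b₁ b₂ : ℝ) :
    ∫ a in a₁..a₂, ∫ b in b₁..b₂, f a b = ∫ b in b₁..b₂, ∫ a in a₁..a₂, f a b :=
  intervalIntegral_intervalIntegral_swap <|
    (hf.continuousOn.integrableOn_compact (isCompact_uIcc.prod isCompact_uIcc)).mono_set
      (Set.prod_mono Set.uIoc_subset_uIcc Set.uIoc_subset_uIcc)

theorem integral_integral_add_of_continuous {f g : ℝ → ℝ → E} (hf : Continuous ↿f)
    (hg : Continuous ↿g) (a₁ a₂ b₁ b₂ : ℝ) :
    ∫ a in a₁..a₂, ∫ b in b₁..b₂, (f a b + g a b) =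
      (∫ a in a₁..a₂, ∫ b in b₁..b₂, f a b) + ∫ a in a₁..a₂, ∫ b in b₁..b₂, g a b := by
  have inner_add (a : ℝ) :
      ∫ b in b₁..b₂, (f a b + g a b) = (∫ b in b₁..b₂, f a b) + ∫ b in b₁..b₂, g a b :=
    integral_add
      ((hf.comp (Continuous.prodMk_right a)).intervalIntegrable b₁ b₂)
      ((hg.comp (Continuous.prodMk_right a)).intervalIntegrable b₁ b₂)
  simp only [inner_add]
  exact integral_add
    ((continuous_parametric_intervalIntegral_of_continuous' hf b₁ b₂).intervalIntegrable a₁ a₂)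
    ((continuous_parametric_intervalIntegral_of_continuous' hg b₁ b₂).intervalIntegrable a₁ a₂)

namespace ContDiffField

variable {f : ℝ → ℝ → ℝ → E}

theorem hasDerivAt_integral_integral (hf : ContDiffField 1 f) (a₁ a₂ b₁ b₂ t : ℝ) :
    HasDerivAt (fun s => ∫ a in a₁..a₂, ∫ b in b₁..b₂, f s a b)
      (∫ a in a₁..a₂, ∫ b in b₁..b₂, pt2 f t a b) t := by
  have hpt : Continuous ↿(pt2 f) := ContDiff.continuous hf.pt2
  refine hasDerivAt_intervalIntegral_of_continuous
    (fun s => continuous_parametric_intervalIntegral_of_continuous' (hf.continuous_slice s) b₁ b₂)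
    (F' := fun s a => ∫ b in b₁..b₂, pt2 f s a b) ?_ (fun s a => ?_) a₁ a₂ t
  · exact continuous_parametric_intervalIntegral_of_continuous'
      (f := fun p : ℝ × ℝ => pt2 f p.1 p.2)
      (hpt.comp (by fun_prop : Continuous fun q : (ℝ × ℝ) × ℝ => (q.1.1, q.1.2, q.2))) b₁ b₂
  · exact hasDerivAt_intervalIntegral_of_continuous
      (fun s => (hf.continuous_slice s).comp (Continuous.prodMk_right a))
      (hpt.comp (by fun_prop : Continuous fun q : ℝ × ℝ => (q.1, a, q.2)))
      (fun s b => hf.hasDerivAt_pt2 s a b) b₁ b₂ s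

theorem integral_integral_add {k : ℕ} {g : ℝ → ℝ → ℝ → E} (hf : ContDiffField k f)
    (hg : ContDiffField k g) (a₁ a₂ b₁ b₂ t : ℝ) :
    ∫ a in a₁..a₂, ∫ b in b₁..b₂, (f + g) t a b =
      (∫ a in a₁..a₂, ∫ b in b₁..b₂, f t a b) + ∫ a in a₁..a₂, ∫ b in b₁..b₂, g t a b :=
  integral_integral_add_of_continuous (hf.continuous_slice t) (hg.continuous_slice t) a₁ a₂ b₁ b₂

variable [CompleteSpace E]

theorem integral_dz1 (hf : ContDiffField 1 f) (a₁ a₂ t b : ℝ) :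
    ∫ a in a₁..a₂, dz1 f t a b = f t a₂ b - f t a₁ b :=
  integral_eq_sub_of_hasDerivAt (fun a _ => hf.hasDerivAt_dz1 t a b)
    (((hf.dz1.continuous_slice t).comp (Continuous.prodMk_left b)).intervalIntegrable _ _)

theorem integral_dz2 (hf : ContDiffField 1 f) (b₁ b₂ t a : ℝ) :
    ∫ b in b₁..b₂, dz2 f t a b = f t a b₂ - f t a b₁ :=
  integral_eq_sub_of_hasDerivAt (fun b _ => hf.hasDerivAt_dz2 t a b)
    (((hf.dz2.continuous_slice t).comp (Continuous.prodMk_right a)).intervalIntegrable _ _)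

theorem integral_integral_dz1 (hf : ContDiffField 1 f) (a₁ a₂ b₁ b₂ t : ℝ) :
    ∫ a in a₁..a₂, ∫ b in b₁..b₂, dz1 f t a b = ∫ b in b₁..b₂, (f t a₂ b - f t a₁ b) := by
  rw [integral_integral_swap_of_continuous (hf.dz1.continuous_slice t)]
  simp only [hf.integral_dz1]

theorem integral_integral_dz2 (hf : ContDiffField 1 f) (a₁ a₂ b₁ b₂ t : ℝ) :
    ∫ a in a₁..a₂, ∫ b in b₁..b₂, dz2 f t a b = ∫ a in a₁..a₂, (f t a b₂ - f t a b₁) := by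
  simp only [hf.integral_dz2]

theorem integral_integral_dz1_dz2 (hf : ContDiffField 2 f) (a₁ a₂ b₁ b₂ t : ℝ) :
    ∫ a in a₁..a₂, ∫ b in b₁..b₂, dz1 (dz2 f) t a b =
      (f t a₂ b₂ - f t a₂ b₁) - (f t a₁ b₂ - f t a₁ b₁) := by
  have hcont (a : ℝ) : Continuous (dz2 f t a) :=
    (hf.dz2.continuous_slice t).comp (Continuous.prodMk_right a)
  have hf₁ : ContDiffField 1 f := hf.of_le one_le_two
  rw [hf.dz2.integral_integral_dz1,
    integral_sub ((hcont a₂).intervalIntegrable _ _)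
      ((hcont a₁).intervalIntegrable _ _),
    hf₁.integral_dz2, hf₁.integral_dz2]

end ContDiffField
end RectangleIntegrals

section ProductRule

theorem dz1_sum {E ι : Type*} [NormedAddCommGroup E] [NormedSpace ℝ E] {s : Finset ι}
    {F : ι → ℝ → ℝ → ℝ → E} (hF : ∀ i ∈ s, ContDiffField 1 (F i)) :
    dz1 (∑ i ∈ s, F i) = ∑ i ∈ s, dz1 (F i) := by
  funext t a b
  simpa only [dz1, Finset.sum_apply] using
    (HasDerivAt.fun_sum fun i hi => (hF i hi).hasDerivAt_dz1 t a b).deriv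

theorem dz2_sum {E ι : Type*} [NormedAddCommGroup E] [NormedSpace ℝ E] {s : Finset ι}
    {F : ι → ℝ → ℝ → ℝ → E} (hF : ∀ i ∈ s, ContDiffField 1 (F i)) :
    dz2 (∑ i ∈ s, F i) = ∑ i ∈ s, dz2 (F i) := by
  funext t a b
  simpa only [dz2, Finset.sum_apply] using
    (HasDerivAt.fun_sum fun i hi => (hF i hi).hasDerivAt_dz2 t a b).deriv

theorem jet_pairing_eq_variational_add_divergence {y s00 s10 s01 s20 s11 s02 : ℝ → ℝ → ℝ → ℝ}
    (hy : ContDiffField 2 y) (h10 : ContDiffField 1 s10) (h01 : ContDiffField 1 s01)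
    (h20 : ContDiffField 2 s20) (h11 : ContDiffField 2 s11) (h02 : ContDiffField 2 s02) :
    y * s00 + dz1 y * s10 + dz2 y * s01 + dz1 (dz1 y) * s20 + dz1 (dz2 y) * s11
        + dz2 (dz2 y) * s02 =
      y * (s00 - dz1 s10 - dz2 s01 + dz1 (dz1 s20) + dz1 (dz2 s11) + dz2 (dz2 s02))
        + dz1 (y * (s10 - dz1 s20 - dz2 s11) + dz1 y * s20)
        + dz2 (y * (s01 - dz2 s02 - dz1 s11) + dz2 y * s02)
        + dz1 (dz2 (y * s11)) := by
  have hy₁ : ContDiffField 1 y := hy.of_le one_le_two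
  have h11₁ : ContDiffField 1 s11 := h11.of_le one_le_two
  have h20₁ : ContDiffField 1 s20 := h20.of_le one_le_two
  have h02₁ : ContDiffField 1 s02 := h02.of_le one_le_two
  have edge1_deriv : dz1 (y * (s10 - dz1 s20 - dz2 s11) + dz1 y * s20) =
      dz1 y * (s10 - dz1 s20 - dz2 s11) + y * (dz1 s10 - dz1 (dz1 s20) - dz1 (dz2 s11))
        + (dz1 (dz1 y) * s20 + dz1 y * dz1 s20) :=
    funext₃ fun t a b => (((hy₁.hasDerivAt_dz1 t a b).mul (((h10.hasDerivAt_dz1 t a b).sub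
      (h20.dz1.hasDerivAt_dz1 t a b)).sub (h11.dz2.hasDerivAt_dz1 t a b))).add
      ((hy.dz1.hasDerivAt_dz1 t a b).mul (h20₁.hasDerivAt_dz1 t a b))).deriv
  have edge2_deriv : dz2 (y * (s01 - dz2 s02 - dz1 s11) + dz2 y * s02) =
      dz2 y * (s01 - dz2 s02 - dz1 s11) + y * (dz2 s01 - dz2 (dz2 s02) - dz2 (dz1 s11))
        + (dz2 (dz2 y) * s02 + dz2 y * dz2 s02) :=
    funext₃ fun t a b => (((hy₁.hasDerivAt_dz2 t a b).mul (((h01.hasDerivAt_dz2 t a b).sub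
      (h02.dz2.hasDerivAt_dz2 t a b)).sub (h11.dz1.hasDerivAt_dz2 t a b))).add
      ((hy.dz2.hasDerivAt_dz2 t a b).mul (h02₁.hasDerivAt_dz2 t a b))).deriv
  have corner_deriv₂ : dz2 (y * s11) = dz2 y * s11 + y * dz2 s11 :=
    funext₃ fun t a b => ((hy₁.hasDerivAt_dz2 t a b).mul (h11₁.hasDerivAt_dz2 t a b)).deriv
  have corner_deriv₁₂ : dz1 (dz2 y * s11 + y * dz2 s11) =
      dz1 (dz2 y) * s11 + dz2 y * dz1 s11 + (dz1 y * dz2 s11 + y * dz1 (dz2 s11)) :=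
    funext₃ fun t a b => (((hy.dz2.hasDerivAt_dz1 t a b).mul (h11₁.hasDerivAt_dz1 t a b)).add
      ((hy₁.hasDerivAt_dz1 t a b).mul (h11.dz2.hasDerivAt_dz1 t a b))).deriv
  rw [edge1_deriv, edge2_deriv, corner_deriv₂, corner_deriv₁₂, h11.dz1_dz2_comm]
  ring

end ProductRule

section Jets

variable {n : ℕ} {H : Jet2 n → ℝ} {x : ℝ → ℝ → ℝ → Fin n → ℝ} {k : ℕ}

theorem clm_jet_apply_eq_sum (φ : Jet2 n →L[ℝ] ℝ) (v₀₀ v₁₀ v₀₁ v₂₀ v₁₁ v₀₂ : Fin n → ℝ) :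
    φ (0, 0, v₀₀, v₁₀, v₀₁, v₂₀, v₁₁, v₀₂) = ∑ α,
      (v₀₀ α * φ (0, 0, Pi.single α 1, 0, 0, 0, 0, 0)
      + v₁₀ α * φ (0, 0, 0, Pi.single α 1, 0, 0, 0, 0)
      + v₀₁ α * φ (0, 0, 0, 0, Pi.single α 1, 0, 0, 0)
      + v₂₀ α * φ (0, 0, 0, 0, 0, Pi.single α 1, 0, 0)
      + v₁₁ α * φ (0, 0, 0, 0, 0, 0, Pi.single α 1, 0)
      + v₀₂ α * φ (0, 0, 0, 0, 0, 0, 0, Pi.single α 1)) := by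
  have basis_expansion : ((0, 0, v₀₀, v₁₀, v₀₁, v₂₀, v₁₁, v₀₂) : Jet2 n) = ∑ α,
      (v₀₀ α • (0, 0, Pi.single α 1, 0, 0, 0, 0, 0)
      + v₁₀ α • (0, 0, 0, Pi.single α 1, 0, 0, 0, 0)
      + v₀₁ α • (0, 0, 0, 0, Pi.single α 1, 0, 0, 0)
      + v₂₀ α • (0, 0, 0, 0, 0, Pi.single α 1, 0, 0)
      + v₁₁ α • (0, 0, 0, 0, 0, 0, Pi.single α 1, 0)
      + v₀₂ α • (0, 0, 0, 0, 0, 0, 0, Pi.single α 1)) := by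
    simp only [Prod.ext_iff, funext_iff]
    simp [Prod.fst_sum, Prod.snd_sum, Pi.single_apply]
  simp only [basis_expansion, map_sum, map_add, map_smul, smul_eq_mul]

theorem ContDiffField.jet2 (hx : ContDiffField (k + 2) x) : ContDiffField k (jet2 x) := by
  have hx₁ : ContDiffField (k + 1) x := hx.of_le (by simp)
  have hx₀ : ContDiffField k x := hx.of_le (by simp)
  exact (contDiff_fst.comp contDiff_snd).prodMk ((contDiff_snd.comp contDiff_snd).prodMk
    (ContDiff.prodMk hx₀ (ContDiff.prodMk hx₁.dz1 (ContDiff.prodMk hx₁.dz2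
      (ContDiff.prodMk hx.dz1.dz1 (ContDiff.prodMk hx.dz2.dz1 hx.dz2.dz2))))))

theorem ContDiffField.comp_jet2 (hH : ContDiff ℝ k H) (hx : ContDiffField (k + 2) x) :
    ContDiffField k fun t a b => H (_root_.jet2 x t a b) :=
  hH.comp hx.jet2

theorem ContDiffField.fderiv_jet2_apply (hH : ContDiff ℝ (k + 1) H)
    (hx : ContDiffField (k + 2) x) (v : Jet2 n) :
    ContDiffField k fun t a b => fderiv ℝ H (_root_.jet2 x t a b) v :=
  ((hH.fderiv_right le_rfl).comp hx.jet2).clm_apply contDiff_const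

/-- The velocity component `ẋ^α` as a scalar field. -/
noncomputable def velocity (x : ℝ → ℝ → ℝ → Fin n → ℝ) (α : Fin n) : ℝ → ℝ → ℝ → ℝ :=
  fun t a b => pt2 x t a b α

theorem contDiffField_velocity (hx : ContDiffField (k + 1) x) (α : Fin n) :
    ContDiffField k (velocity x α) :=
  hx.pt2.apply α

theorem dz1_velocity (hx : ContDiffField 2 x) (α : Fin n) :
    dz1 (velocity x α) = velocity (dz1 x) α := by
  funext t a b
  rw [velocity, hx.pt2_dz1_comm]
  exact (hasDerivAt_pi.1 (hx.pt2.hasDerivAt_dz1 t a b) α).deriv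

theorem dz2_velocity (hx : ContDiffField 2 x) (α : Fin n) :
    dz2 (velocity x α) = velocity (dz2 x) α := by
  funext t a b
  rw [velocity, hx.pt2_dz2_comm]
  exact (hasDerivAt_pi.1 (hx.pt2.hasDerivAt_dz2 t a b) α).deriv

theorem hasDerivAt_jet2 (hx : ContDiffField 3 x) (t a b : ℝ) :
    HasDerivAt (fun s => jet2 x s a b)
      (0, 0, pt2 x t a b, pt2 (dz1 x) t a b, pt2 (dz2 x) t a b, pt2 (dz1 (dz1 x)) t a b,
        pt2 (dz1 (dz2 x)) t a b, pt2 (dz2 (dz2 x)) t a b) t :=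
  (hasDerivAt_const t a).prodMk <| (hasDerivAt_const t b).prodMk <|
    (hx.hasDerivAt_pt2 t a b).prodMk <| (hx.dz1.hasDerivAt_pt2 t a b).prodMk <|
    (hx.dz2.hasDerivAt_pt2 t a b).prodMk <| (hx.dz1.dz1.hasDerivAt_pt2 t a b).prodMk <|
    (hx.dz2.dz1.hasDerivAt_pt2 t a b).prodMk (hx.dz2.dz2.hasDerivAt_pt2 t a b)

theorem pt2_comp_jet2 (hH : Differentiable ℝ H) (hx : ContDiffField 3 x) :
    pt2 (fun t a b => H (jet2 x t a b)) = ∑ α,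
      (velocity x α * sl00 H x α + dz1 (velocity x α) * sl10 H x α
        + dz2 (velocity x α) * sl01 H x α + dz1 (dz1 (velocity x α)) * sl20 H x α
        + dz1 (dz2 (velocity x α)) * sl11 H x α + dz2 (dz2 (velocity x α)) * sl02 H x α) := by
  have hx₂ : ContDiffField 2 x := hx.of_le (by simp)
  simp only [dz1_velocity, dz2_velocity, hx₂, hx.dz1, hx.dz2]
  funext t a b
  simp only [Finset.sum_apply]
  exact ((hH (jet2 x t a b)).hasFDerivAt.comp_hasDerivAt t (hasDerivAt_jet2 hx t a b)).deriv.trans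
    (clm_jet_apply_eq_sum ..)

end Jets

section BoundaryPower

variable {n : ℕ} {H : Jet2 n → ℝ} {x : ℝ → ℝ → ℝ → Fin n → ℝ}

/-- The summand of `edge1` belonging to the component `x^α`, as a scalar field. -/
noncomputable def edge1Summand (H : Jet2 n → ℝ) (x : ℝ → ℝ → ℝ → Fin n → ℝ) (α : Fin n) :
    ℝ → ℝ → ℝ → ℝ :=
  velocity x α * (sl10 H x α - dz1 (sl20 H x α) - dz2 (sl11 H x α))
    + dz1 (velocity x α) * sl20 H x α

/-- The summand of `edge2` belonging to the component `x^α`, as a scalar field. -/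
noncomputable def edge2Summand (H : Jet2 n → ℝ) (x : ℝ → ℝ → ℝ → Fin n → ℝ) (α : Fin n) :
    ℝ → ℝ → ℝ → ℝ :=
  velocity x α * (sl01 H x α - dz2 (sl02 H x α) - dz1 (sl11 H x α))
    + dz2 (velocity x α) * sl02 H x α

theorem edge1_eq_sum (hx : ContDiffField 2 x) : edge1 H x = ∑ α, edge1Summand H x α := by
  simp only [edge1Summand, dz1_velocity hx]
  funext t a b
  simp only [Finset.sum_apply]
  rfl

theorem edge2_eq_sum (hx : ContDiffField 2 x) : edge2 H x = ∑ α, edge2Summand H x α := by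
  simp only [edge2Summand, dz2_velocity hx]
  funext t a b
  simp only [Finset.sum_apply]
  rfl

theorem corner2_eq_sum : corner2 H x = ∑ α, velocity x α * sl11 H x α := by
  funext t a b
  simp only [Finset.sum_apply]
  rfl

theorem contDiffField_edge1Summand (hH : ContDiff ℝ 3 H) (hx : ContDiffField 4 x) (α : Fin n) :
    ContDiffField 1 (edge1Summand H x α) := by
  have slot := ContDiffField.fderiv_jet2_apply (k := 2) hH hx
  have hvel : ContDiffField 2 (velocity x α) := contDiffField_velocity (hx.of_le (by simp)) α
  exact ((hvel.of_le one_le_two).mul ((((slot _).of_le one_le_two).sub (slot _).dz1).sub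
    (slot _).dz2)).add (hvel.dz1.mul ((slot _).of_le one_le_two))

theorem contDiffField_edge2Summand (hH : ContDiff ℝ 3 H) (hx : ContDiffField 4 x) (α : Fin n) :
    ContDiffField 1 (edge2Summand H x α) := by
  have slot := ContDiffField.fderiv_jet2_apply (k := 2) hH hx
  have hvel : ContDiffField 2 (velocity x α) := contDiffField_velocity (hx.of_le (by simp)) α
  exact ((hvel.of_le one_le_two).mul ((((slot _).of_le one_le_two).sub (slot _).dz2).sub
    (slot _).dz1)).add (hvel.dz2.mul ((slot _).of_le one_le_two))

theorem contDiffField_edge1 (hH : ContDiff ℝ 3 H) (hx : ContDiffField 4 x) :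
    ContDiffField 1 (edge1 H x) := by
  rw [edge1_eq_sum (hx.of_le (by simp))]
  exact .sum fun α _ => contDiffField_edge1Summand hH hx α

theorem contDiffField_edge2 (hH : ContDiff ℝ 3 H) (hx : ContDiffField 4 x) :
    ContDiffField 1 (edge2 H x) := by
  rw [edge2_eq_sum (hx.of_le (by simp))]
  exact .sum fun α _ => contDiffField_edge2Summand hH hx α

theorem contDiffField_velocity_mul_sl11 (hH : ContDiff ℝ 3 H) (hx : ContDiffField 4 x)
    (α : Fin n) : ContDiffField 2 (velocity x α * sl11 H x α) :=
  (contDiffField_velocity (hx.of_le (by simp)) α).mul (.fderiv_jet2_apply hH hx _)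

theorem contDiffField_corner2 (hH : ContDiff ℝ 3 H) (hx : ContDiffField 4 x) :
    ContDiffField 2 (corner2 H x) := by
  rw [corner2_eq_sum]
  exact .sum fun α _ => contDiffField_velocity_mul_sl11 hH hx α

theorem contDiffField_varDer2 (hH : ContDiff ℝ 3 H) (hx : ContDiffField 4 x) (α : Fin n) :
    ContDiffField 0 (varDer2 H x α) := by
  have slot := ContDiffField.fderiv_jet2_apply (k := 2) hH hx
  exact ((((((slot _).of_le zero_le_two).sub ((slot _).dz1.of_le zero_le_one)).sub
    ((slot _).dz2.of_le zero_le_one)).add (slot _).dz1.dz1).add (slot _).dz2.dz1).add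
    (slot _).dz2.dz2

theorem contDiffField_sum_velocity_mul_varDer2 (hH : ContDiff ℝ 3 H) (hx : ContDiffField 4 x) :
    ContDiffField 0 (∑ α, velocity x α * varDer2 H x α) :=
  .sum fun α _ =>
    (contDiffField_velocity (hx.of_le (by simp)) α).mul (contDiffField_varDer2 hH hx α)

theorem pt2_comp_jet2_eq_varDer2_add_divergence (hH : ContDiff ℝ 3 H) (hx : ContDiffField 4 x) :
    pt2 (fun t a b => H (jet2 x t a b)) =
      (∑ α, velocity x α * varDer2 H x α) + dz1 (edge1 H x) + dz2 (edge2 H x)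
        + dz1 (dz2 (corner2 H x)) := by
  have slot := ContDiffField.fderiv_jet2_apply (k := 2) hH hx
  have hx₂ : ContDiffField 2 x := hx.of_le (by simp)
  have corner (α : Fin n) := contDiffField_velocity_mul_sl11 hH hx α
  rw [pt2_comp_jet2 (hH.differentiable (by simp)) (hx.of_le (by simp)), edge1_eq_sum hx₂,
    edge2_eq_sum hx₂, corner2_eq_sum, dz1_sum fun α _ => contDiffField_edge1Summand hH hx α,
    dz2_sum fun α _ => contDiffField_edge2Summand hH hx α,
    dz2_sum fun α _ => (corner α).of_le one_le_two, dz1_sum fun α _ => (corner α).dz2,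
    ← Finset.sum_add_distrib, ← Finset.sum_add_distrib, ← Finset.sum_add_distrib]
  exact Finset.sum_congr rfl fun α _ => jet_pairing_eq_variational_add_divergence
    (contDiffField_velocity (hx.of_le (by simp)) α) ((slot _).of_le one_le_two)
    ((slot _).of_le one_le_two) (slot _) (slot _) (slot _)

/-- The total power entering the rectangle `[0,L₁] × [0,L₂]` through its edges and corners. -/
noncomputable def boundaryPower (H : Jet2 n → ℝ) (x : ℝ → ℝ → ℝ → Fin n → ℝ)
    (L1 L2 t : ℝ) : ℝ :=
  (∫ b in (0:ℝ)..L2, (edge1 H x t L1 b - edge1 H x t 0 b))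
    + (∫ a in (0:ℝ)..L1, (edge2 H x t a L2 - edge2 H x t a 0))
    + ((corner2 H x t L1 L2 - corner2 H x t L1 0) - (corner2 H x t 0 L2 - corner2 H x t 0 0))

theorem boundaryPower_eq_zero {L1 L2 t : ℝ}
    (hedge1 : ∀ b ∈ Set.uIcc 0 L2, edge1 H x t 0 b = 0 ∧ edge1 H x t L1 b = 0)
    (hedge2 : ∀ a ∈ Set.uIcc 0 L1, edge2 H x t a 0 = 0 ∧ edge2 H x t a L2 = 0)
    (hcorner : corner2 H x t 0 0 = 0 ∧ corner2 H x t L1 0 = 0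
      ∧ corner2 H x t 0 L2 = 0 ∧ corner2 H x t L1 L2 = 0) :
    boundaryPower H x L1 L2 t = 0 := by
  have flux1 : ∫ b in (0:ℝ)..L2, (edge1 H x t L1 b - edge1 H x t 0 b) = 0 :=
    intervalIntegral.integral_zero_ae (.of_forall fun b hb => by
      simp [hedge1 b (Set.uIoc_subset_uIcc hb)])
  have flux2 : ∫ a in (0:ℝ)..L1, (edge2 H x t a L2 - edge2 H x t a 0) = 0 :=
    intervalIntegral.integral_zero_ae (.of_forall fun a ha => by
      simp [hedge2 a (Set.uIoc_subset_uIcc ha)])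
  simp [boundaryPower, flux1, flux2, hcorner]

theorem hasDerivAt_energy (hH : ContDiff ℝ 3 H) (hx : ContDiffField 4 x) (L1 L2 t : ℝ) :
    HasDerivAt (fun τ => ∫ a in (0:ℝ)..L1, ∫ b in (0:ℝ)..L2, H (jet2 x τ a b))
      ((∫ a in (0:ℝ)..L1, ∫ b in (0:ℝ)..L2, ∑ α, pt2 x t a b α * varDer2 H x α t a b)
        + boundaryPower H x L1 L2 t) t := by
  have density : ContDiffField 1 fun t a b => H (jet2 x t a b) :=
    .comp_jet2 (hH.of_le (by norm_num)) (hx.of_le (by simp))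
  have edge₁ := contDiffField_edge1 hH hx
  have edge₂ := contDiffField_edge2 hH hx
  have corner := contDiffField_corner2 hH hx
  have variational := contDiffField_sum_velocity_mul_varDer2 hH hx
  refine (density.hasDerivAt_integral_integral 0 L1 0 L2 t).congr_deriv ?_
  rw [pt2_comp_jet2_eq_varDer2_add_divergence hH hx,
    ((variational.add edge₁.dz1).add edge₂.dz2).integral_integral_add corner.dz2.dz1,
    (variational.add edge₁.dz1).integral_integral_add edge₂.dz2,
    variational.integral_integral_add edge₁.dz1, edge₁.integral_integral_dz1,
    edge₂.integral_integral_dz2, corner.integral_integral_dz1_dz2, add_assoc, add_assoc,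
    ← add_assoc (∫ b in (0:ℝ)..L2, _)]
  simp only [Finset.sum_apply]
  rfl

end BoundaryPower

section PowerBalance

theorem sum_sum_skew_eq_zero {ι A : Type*} [Fintype ι] [CommRing A] [IsAddTorsionFree A]
    {J : ι → ι → A} (hJ : ∀ α β, J α β = -J β α) (v : ι → A) :
    ∑ α, ∑ β, v α * J α β * v β = 0 := by
  refine self_eq_neg.1 ?_
  calc ∑ α, ∑ β, v α * J α β * v β = ∑ β, ∑ α, v α * J α β * v β := Finset.sum_comm
    _ = -∑ β, ∑ α, v β * J β α * v α := by
      simp only [← Finset.sum_neg_distrib]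
      refine Finset.sum_congr rfl fun β _ => Finset.sum_congr rfl fun α _ => ?_
      rw [hJ α β]
      ring

theorem sum_velocity_mul_effort_add_dissipation {ι κ A : Type*} [Fintype ι] [Fintype κ]
    [CommRing A] [IsAddTorsionFree A] {J R : ι → ι → A} {G : ι → κ → A} {u : κ → A} {v y : ι → A}
    (hJ : ∀ α β, J α β = -J β α)
    (hy : ∀ α, y α = (∑ β, (J α β - R α β) * v β) + ∑ ξ, G α ξ * u ξ) :
    (∑ α, y α * v α) + ∑ α, ∑ β, v α * R α β * v β = ∑ ξ, u ξ * ∑ α, G α ξ * v α := by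
  have expand (α : ι) : y α * v α + ∑ β, v α * R α β * v β =
      (∑ β, v α * J α β * v β) + ∑ ξ, u ξ * (G α ξ * v α) := by
    rw [hy, add_mul, Finset.sum_mul, Finset.sum_mul, add_right_comm, ← Finset.sum_add_distrib]
    congr! 2 <;> ring
  rw [← Finset.sum_add_distrib, Finset.sum_congr rfl fun α _ => expand α,
    Finset.sum_add_distrib, sum_sum_skew_eq_zero hJ, zero_add, Finset.sum_comm]
  simp only [Finset.mul_sum]

theorem statement2_general {n : ℕ} {κ : Type*} [Fintype κ] (L1 L2 : ℝ)
    (H : Jet2 n → ℝ) (hH : ContDiff ℝ 3 H)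
    (x : ℝ → ℝ → ℝ → Fin n → ℝ) (hx : ContDiffField 4 x)
    (J R : Fin n → Fin n → ℝ → ℝ → ℝ → ℝ) (G : Fin n → κ → ℝ → ℝ → ℝ → ℝ)
    (u : κ → ℝ → ℝ → ℝ → ℝ) (t : ℝ) (hR : ∀ α β, Continuous ↿(R α β t))
    (hJskew : ∀ α β a b, J α β t a b = -J β α t a b)
    (hdyn : ∀ a ∈ Set.uIcc 0 L1, ∀ b ∈ Set.uIcc 0 L2, ∀ α,
      pt2 x t a b α =
        (∑ β, (J α β t a b - R α β t a b) * varDer2 H x β t a b)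
          + ∑ ξ, G α ξ t a b * u ξ t a b) :
    HasDerivAt (fun τ => ∫ a in (0:ℝ)..L1, ∫ b in (0:ℝ)..L2, H (jet2 x τ a b))
      (-(∫ a in (0:ℝ)..L1, ∫ b in (0:ℝ)..L2,
          ∑ α, ∑ β, varDer2 H x α t a b * R α β t a b * varDer2 H x β t a b)
        + (∫ a in (0:ℝ)..L1, ∫ b in (0:ℝ)..L2,
            ∑ ξ, u ξ t a b * ∑ α, G α ξ t a b * varDer2 H x α t a b)
        + boundaryPower H x L1 L2 t) t := by
  have effort (α : Fin n) : Continuous ↿(varDer2 H x α t) :=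
    (contDiffField_varDer2 hH hx α).continuous_slice t
  have velocity_slice (α : Fin n) : Continuous ↿(velocity x α t) :=
    (contDiffField_velocity (k := 0) (hx.of_le (by simp)) α).continuous_slice t
  have variational : Continuous fun p : ℝ × ℝ =>
      ∑ α, pt2 x t p.1 p.2 α * varDer2 H x α t p.1 p.2 :=
    continuous_finsetSum _ fun α _ => (velocity_slice α).fun_mul (effort α)
  have dissipation : Continuous fun p : ℝ × ℝ =>
      ∑ α, ∑ β, varDer2 H x α t p.1 p.2 * R α β t p.1 p.2 * varDer2 H x β t p.1 p.2 :=
    continuous_finsetSum _ fun α _ => continuous_finsetSum _ fun β _ =>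
      ((effort α).fun_mul (hR α β)).fun_mul (effort β)
  refine (hasDerivAt_energy hH hx L1 L2 t).congr_deriv ?_
  rw [add_left_inj, eq_neg_add_iff_add_eq, add_comm,
    ← integral_integral_add_of_continuous (f := fun a b => ∑ α, pt2 x t a b α * varDer2 H x α t a b)
      variational dissipation]
  exact intervalIntegral.integral_congr fun a ha => intervalIntegral.integral_congr fun b hb =>
    sum_velocity_mul_effort_add_dissipation (hJskew · · a b) (hdyn a ha b hb)

end PowerBalance

/-- power balance of an in-domain actuated port-Hamiltonian system
with second-order Hamiltonian density on the rectangle `B = [0,L₁] × [0,L₂]`,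
with vanishing boundary contributions. -/
theorem statement2 {n l : ℕ} (L1 L2 : ℝ) (hL1 : 0 < L1) (hL2 : 0 < L2)
    (H : Jet2 n → ℝ) (hH : ContDiff ℝ (⊤ : ℕ∞) H)
    (x : ℝ → ℝ → ℝ → Fin n → ℝ)
    (hx : ContDiff ℝ (⊤ : ℕ∞) (fun q : ℝ × ℝ × ℝ => x q.1 q.2.1 q.2.2))
    (J R : Fin n → Fin n → ℝ → ℝ → ℝ → ℝ)
    (G : Fin n → Fin l → ℝ → ℝ → ℝ → ℝ)
    (hJ : ∀ α β, ContDiff ℝ (⊤ : ℕ∞) (fun q : ℝ × ℝ × ℝ => J α β q.1 q.2.1 q.2.2))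
    (hR : ∀ α β, ContDiff ℝ (⊤ : ℕ∞) (fun q : ℝ × ℝ × ℝ => R α β q.1 q.2.1 q.2.2))
    (hG : ∀ α ξ, ContDiff ℝ (⊤ : ℕ∞) (fun q : ℝ × ℝ × ℝ => G α ξ q.1 q.2.1 q.2.2))
    (hJskew : ∀ α β t a b, J α β t a b = -J β α t a b)
    (u : Fin l → ℝ → ℝ)
    -- the port-Hamiltonian dynamics hold on `B`
    (hdyn : ∀ t, ∀ a ∈ Set.Icc (0:ℝ) L1, ∀ b ∈ Set.Icc (0:ℝ) L2, ∀ α,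
      pt2 x t a b α =
        (∑ β : Fin n, (J α β t a b - R α β t a b) * varDer2 H x β t a b)
          + ∑ ξ : Fin l, G α ξ t a b * u ξ t)
    -- the boundary contributions vanish on the edges with normal direction `z¹`
    (hb1 : ∀ t, ∀ b ∈ Set.Icc (0:ℝ) L2, edge1 H x t 0 b = 0 ∧ edge1 H x t L1 b = 0)
    -- the boundary contributions vanish on the edges with normal direction `z²`
    (hb2 : ∀ t, ∀ a ∈ Set.Icc (0:ℝ) L1, edge2 H x t a 0 = 0 ∧ edge2 H x t a L2 = 0)
    -- the corner contributions vanish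
    (hcor : ∀ t, corner2 H x t 0 0 = 0 ∧ corner2 H x t L1 0 = 0
      ∧ corner2 H x t 0 L2 = 0 ∧ corner2 H x t L1 L2 = 0)
    (t : ℝ) :
    HasDerivAt (fun τ => ∫ a in (0:ℝ)..L1, ∫ b in (0:ℝ)..L2, H (jet2 x τ a b))
      (-(∫ a in (0:ℝ)..L1, ∫ b in (0:ℝ)..L2,
          ∑ α : Fin n, ∑ β : Fin n,
            varDer2 H x α t a b * R α β t a b * varDer2 H x β t a b)
        + ∫ a in (0:ℝ)..L1, ∫ b in (0:ℝ)..L2,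
            ∑ ξ : Fin l, u ξ t * (∑ α : Fin n, G α ξ t a b * varDer2 H x α t a b)) t := by
  rw [← Set.uIcc_of_le hL1.le] at hdyn hb2
  rw [← Set.uIcc_of_le hL2.le] at hdyn hb1
  have power_balance := statement2_general L1 L2 H (contDiff_infty.1 hH 3) x
    (contDiff_infty.1 hx 4) J R G (fun ξ τ _ _ => u ξ τ) t
    (fun α β => (ContDiff.continuous (hR α β)).comp (Continuous.prodMk_right t))
    (hJskew · · t) (hdyn t)
  rwa [boundaryPower_eq_zero (hb1 t) (hb2 t) (hcor t), add_zero] at power_balance
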